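/- If a and b are terms of Λ of the same type and a = b is not provable in Λ, then for every two terms c and d of the same type one can construct type-instances a′ of a and b′ of b, terms h₁, …, hₙ (n ≥ 0), and find variables x₁, …, x_m (m ≥ 0), such that (λx₁…x_m.a′)h₁…hₙ = c and (λx₁…x_m.b′)h₁…hₙ = d are both provable in Λ. -/

import Mathlib

set_option autoImplicit false

/-- Simple types over a set `ν` of atomic types. -/
inductive Ty (ν : Type) : Type
  | atom : ν → Ty ν
  | arrow : Ty ν → Ty ν → Ty ν

/-- A typing context: the (types of the) free variables. -/
abbrev Ctx (ν : Type) : Type := List (Ty ν)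

/-- Typed de Bruijn variables. -/
inductive Var {ν : Type} : Ctx ν → Ty ν → Type
  | vz {Γ : Ctx ν} {A : Ty ν} : Var (A :: Γ) A
  | vs {Γ : Ctx ν} {A B : Ty ν} : Var Γ A → Var (B :: Γ) A

/-- Typed terms of the simply typed lambda calculus Λ. -/
inductive Tm {ν : Type} : Ctx ν → Ty ν → Type
  | var {Γ : Ctx ν} {A : Ty ν} : Var Γ A → Tm Γ A
  | app {Γ : Ctx ν} {A B : Ty ν} : Tm Γ (Ty.arrow A B) → Tm Γ A → Tm Γ B
  | lam {Γ : Ctx ν} {A B : Ty ν} : Tm (A :: Γ) B → Tm Γ (Ty.arrow A B)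

/-- Renamings between contexts. -/
def Ren {ν : Type} (Γ Δ : Ctx ν) : Type := ∀ A : Ty ν, Var Γ A → Var Δ A

def Ren.ext {ν : Type} {Γ Δ : Ctx ν} (ρ : Ren Γ Δ) (A : Ty ν) : Ren (A :: Γ) (A :: Δ) :=
  fun _ v => match v with
  | .vz => .vz
  | .vs w => .vs (ρ _ w)

def Tm.rename {ν : Type} : ∀ {Γ Δ : Ctx ν} {A : Ty ν}, Ren Γ Δ → Tm Γ A → Tm Δ A
  | _, _, _, ρ, .var v => .var (ρ _ v)
  | _, _, _, ρ, .app f a => .app (f.rename ρ) (a.rename ρ)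
  | _, _, _, ρ, .lam b => .lam (b.rename (ρ.ext _))

/-- Simultaneous substitutions. -/
def Subst {ν : Type} (Γ Δ : Ctx ν) : Type := ∀ A : Ty ν, Var Γ A → Tm Δ A

def Subst.ext {ν : Type} {Γ Δ : Ctx ν} (σ : Subst Γ Δ) (A : Ty ν) :
    ∀ B : Ty ν, Var (A :: Γ) B → Tm (A :: Δ) B
  | _, .vz => .var .vz
  | _, .vs w => (σ _ w).rename (fun _ => Var.vs)

def Tm.subst {ν : Type} : ∀ {Γ Δ : Ctx ν} {A : Ty ν}, Subst Γ Δ → Tm Γ A → Tm Δ A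
  | _, _, _, σ, .var v => σ _ v
  | _, _, _, σ, .app f a => .app (f.subst σ) (a.subst σ)
  | _, _, _, σ, .lam b => .lam (b.subst (Subst.ext σ _))

/-- Extending a substitution with a term for the last variable. -/
def Subst.cons {ν : Type} {Γ Δ : Ctx ν} {A : Ty ν} (b : Tm Δ A) (σ : Subst Γ Δ) :
    ∀ B : Ty ν, Var (A :: Γ) B → Tm Δ B
  | _, .vz => b
  | _, .vs w => σ _ w

/-- Substitution of a single term for the last variable: `a[b/x]`. -/
def Tm.subst1 {ν : Type} {Γ : Ctx ν} {A B : Ty ν} (a : Tm (A :: Γ) B) (b : Tm Γ A) : Tm Γ B :=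
  a.subst (Subst.cons b (fun _ v => .var v))

/-- The theory Λ of βη-equality. -/
inductive Eqv {ν : Type} : ∀ {Γ : Ctx ν} {A : Ty ν}, Tm Γ A → Tm Γ A → Prop
  | refl {Γ : Ctx ν} {A : Ty ν} (a : Tm Γ A) : Eqv a a
  | symm {Γ : Ctx ν} {A : Ty ν} {a b : Tm Γ A} : Eqv a b → Eqv b a
  | trans {Γ : Ctx ν} {A : Ty ν} {a b c : Tm Γ A} : Eqv a b → Eqv b c → Eqv a c
  | congApp {Γ : Ctx ν} {A B : Ty ν} {f g : Tm Γ (Ty.arrow A B)} {a b : Tm Γ A} :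
      Eqv f g → Eqv a b → Eqv (.app f a) (.app g b)
  | congLam {Γ : Ctx ν} {A B : Ty ν} {a b : Tm (A :: Γ) B} :
      Eqv a b → Eqv (.lam a) (.lam b)
  | beta {Γ : Ctx ν} {A B : Ty ν} (a : Tm (A :: Γ) B) (b : Tm Γ A) :
      Eqv (.app (.lam a) b) (a.subst1 b)
  | eta {Γ : Ctx ν} {A B : Ty ν} (a : Tm Γ (Ty.arrow A B)) :
      Eqv (.lam (.app (a.rename (fun _ => Var.vs)) (.var .vz))) a

/-- Substitution of types for the atomic types, on types. -/
def Ty.substA {ν : Type} (σ : ν → Ty ν) : Ty ν → Ty ν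
  | .atom v => σ v
  | .arrow A B => .arrow (A.substA σ) (B.substA σ)

def Var.substA {ν : Type} (σ : ν → Ty ν) :
    ∀ {Γ : Ctx ν} {A : Ty ν}, Var Γ A → Var (Γ.map (Ty.substA σ)) (A.substA σ)
  | _, _, .vz => .vz
  | _, _, .vs v => .vs (v.substA σ)

/-- Substitution of types for the atomic types, on terms: type-instances. -/
def Tm.substA {ν : Type} (σ : ν → Ty ν) :
    ∀ {Γ : Ctx ν} {A : Ty ν}, Tm Γ A → Tm (Γ.map (Ty.substA σ)) (A.substA σ)
  | _, _, .var v => .var (v.substA σ)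
  | _, _, .app f a => .app (f.substA σ) (a.substA σ)
  | _, _, .lam b => .lam (b.substA σ)

/-- `Ty.arrs [A₁, …, Aₘ] B = Aₘ → (… → (A₁ → B))` : the type of `λx₁…xₘ.a`. -/
def Ty.arrs {ν : Type} : Ctx ν → Ty ν → Ty ν
  | [], B => B
  | A :: Γ, B => Ty.arrs Γ (Ty.arrow A B)

/-- λ-abstracting all the free variables of a term. -/
def Tm.lamAll {ν : Type} : ∀ {Γ : Ctx ν} {A : Ty ν}, Tm Γ A → Tm [] (Ty.arrs Γ A)
  | [], _, a => a
  | _ :: Γ, _, a => Tm.lamAll (Γ := Γ) (Tm.lam a)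

/-- `Ty.arrsR [B₁, …, Bₙ] C = B₁ → (… → (Bₙ → C))`. -/
def Ty.arrsR {ν : Type} : List (Ty ν) → Ty ν → Ty ν
  | [], C => C
  | B :: Bs, C => Ty.arrow B (Ty.arrsR Bs C)

/-- A list of terms `h₁ : B₁, …, hₙ : Bₙ` in context `Δ`. -/
inductive HList {ν : Type} (Δ : Ctx ν) : List (Ty ν) → Type
  | nil : HList Δ []
  | cons {B : Ty ν} {Bs : List (Ty ν)} : Tm Δ B → HList Δ Bs → HList Δ (B :: Bs)

/-- Iterated application `t h₁ … hₙ`. -/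
def HList.apps {ν : Type} {Δ : Ctx ν} :
    ∀ {Bs : List (Ty ν)} {C : Ty ν}, HList Δ Bs → Tm Δ (Ty.arrsR Bs C) → Tm Δ C
  | _, _, .nil, t => t
  | _, _, .cons h hs, t => HList.apps hs (t.app h)

/-- Iterated application `t h₁ … hₙ`. -/
def Tm.apps {ν : Type} {Δ : Ctx ν} {Bs : List (Ty ν)} {C : Ty ν}
    (t : Tm Δ (Ty.arrsR Bs C)) (hs : HList Δ Bs) : Tm Δ C :=
  hs.apps t

/-- Weakening of a closed term into an arbitrary context. -/
def Var.elim0 {ν : Type} {A : Ty ν} {C : Sort*} : Var ([] : Ctx ν) A → C :=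
  fun v => nomatch v

def Tm.wk {ν : Type} {Δ : Ctx ν} {A : Ty ν} (t : Tm ([] : Ctx ν) A) : Tm Δ A :=
  t.rename (fun _ v => v.elim0)

/-!
Terms that are not provably equal have distinct η-long normal forms. Normalization by evaluation
reads a normal form back from a denotation in a full type structure, and for two given terms this
involves only finitely many raw terms; hence a full type structure over a finite set `Fin n`
already separates the two terms.

Now substitute `C → ⋯ → C → C`, with `n` arguments, for every atomic type. The `n` projections
represent the elements of `Fin n`. A projection is also a case distinction between `n` values, so
every functional of the finite type structure is represented by a term. The arguments that separate
the two denotations are therefore given by terms; they take the two λ-closed instances to two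
different projections, which pick `c` and `d` out of a suitable tuple of `c`s and `d`s.
-/

section

variable {ν : Type} {Γ Δ Θ : Ctx ν} {A B C : Ty ν}

/-! ### Substitution -/

-- Lets `rw` and `simp` match the functions `fun B v => _` below against `Ren` and `Subst`.
attribute [reducible] Ren Subst

theorem Ren.ext_comp (ρ : Ren Γ Δ) (ρ' : Ren Δ Θ) (A : Ty ν) :
    (fun B v => ρ'.ext A B (ρ.ext A B v)) = Ren.ext (fun B v => ρ' B (ρ B v)) A := by
  funext B v; cases v <;> rfl

theorem Tm.rename_rename (t : Tm Γ A) (ρ : Ren Γ Δ) (ρ' : Ren Δ Θ) :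
    (t.rename ρ).rename ρ' = t.rename fun B v => ρ' B (ρ B v) := by
  induction t generalizing Δ Θ with
  | var => rfl
  | app f a ihf iha => simp only [rename, ihf, iha]
  | lam b ih => simp only [rename, ih, Ren.ext_comp]

theorem Subst.ext_comp_ren (ρ : Ren Γ Δ) (σ : Subst Δ Θ) (A : Ty ν) :
    (fun B v => σ.ext A B (ρ.ext A B v)) = Subst.ext (fun B v => σ B (ρ B v)) A := by
  funext B v; cases v <;> rfl

theorem Tm.rename_subst (t : Tm Γ A) (ρ : Ren Γ Δ) (σ : Subst Δ Θ) :
    (t.rename ρ).subst σ = t.subst fun B v => σ B (ρ B v) := by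
  induction t generalizing Δ Θ with
  | var => rfl
  | app f a ihf iha => simp only [rename, subst, ihf, iha]
  | lam b ih => simp only [rename, subst, ih, Subst.ext_comp_ren]

theorem Subst.rename_ext (σ : Subst Γ Δ) (ρ : Ren Δ Θ) (A : Ty ν) :
    (fun B v => (σ.ext A B v).rename (ρ.ext A)) = Subst.ext (fun B v => (σ B v).rename ρ) A := by
  funext B v
  cases v with
  | vz => rfl
  | vs w => simp only [Subst.ext, Tm.rename_rename, Ren.ext]

theorem Tm.subst_rename (t : Tm Γ A) (σ : Subst Γ Δ) (ρ : Ren Δ Θ) :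
    (t.subst σ).rename ρ = t.subst fun B v => (σ B v).rename ρ := by
  induction t generalizing Δ Θ with
  | var => rfl
  | app f a ihf iha => simp only [rename, subst, ihf, iha]
  | lam b ih => simp only [rename, subst, ih, Subst.rename_ext]

theorem Subst.subst_ext (σ : Subst Γ Δ) (τ : Subst Δ Θ) (A : Ty ν) :
    (fun B v => (σ.ext A B v).subst (τ.ext A)) = Subst.ext (fun B v => (σ B v).subst τ) A := by
  funext B v
  cases v with
  | vz => rfl
  | vs w => simp only [Subst.ext, Tm.rename_subst, Tm.subst_rename]

theorem Tm.subst_subst (t : Tm Γ A) (σ : Subst Γ Δ) (τ : Subst Δ Θ) :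
    (t.subst σ).subst τ = t.subst fun B v => (σ B v).subst τ := by
  induction t generalizing Δ Θ with
  | var => rfl
  | app f a ihf iha => simp only [subst, ihf, iha]
  | lam b ih => simp only [subst, ih, Subst.subst_ext]

theorem Subst.ext_var (Γ : Ctx ν) (A : Ty ν) :
    Subst.ext (fun _ v => Tm.var v : Subst Γ Γ) A = fun _ v => Tm.var v := by
  funext B v; cases v <;> rfl

theorem Tm.subst_var (t : Tm Γ A) : t.subst (fun _ v => var v) = t := by
  induction t with
  | var => rfl
  | app f a ihf iha => simp only [subst, ihf, iha]
  | lam b ih => simp only [subst, Subst.ext_var, ih]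

theorem Tm.rename_eq_subst (t : Tm Γ A) (ρ : Ren Γ Δ) :
    t.rename ρ = t.subst fun B v => var (ρ B v) := by
  rw [← subst_var (t.rename ρ), rename_subst]

/-- A term seen in a context with one more variable. -/
abbrev Tm.weaken (t : Tm Γ A) : Tm (B :: Γ) A := t.rename fun _ => Var.vs

theorem Tm.weaken_subst1 (t : Tm Γ A) (s : Tm Γ B) : t.weaken.subst1 s = t := by
  simp only [subst1, rename_subst, Subst.cons, subst_var]

theorem Tm.weaken_rename_ext (t : Tm Γ A) (ρ : Ren Γ Δ) :
    t.weaken.rename (ρ.ext B) = (t.rename ρ).weaken := by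
  simp only [weaken, rename_rename, Ren.ext]

theorem Tm.weaken_subst_ext (t : Tm Γ A) (σ : Subst Γ Δ) :
    t.weaken.subst (σ.ext B) = (t.subst σ).weaken := by
  simp only [weaken, rename_subst, subst_rename, Subst.ext]

theorem Tm.subst_ext_subst1 (b : Tm (A :: Γ) B) (σ : Subst Γ Δ) (s : Tm Δ A) :
    (b.subst (σ.ext A)).subst1 s = b.subst (Subst.cons s σ) := by
  rw [subst1, subst_subst]
  congr 1
  funext B v
  cases v with
  | vz => rfl
  | vs w => exact weaken_subst1 _ _

theorem Tm.rename_subst1 (b : Tm (A :: Γ) B) (s : Tm Γ A) (ρ : Ren Γ Δ) :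
    (b.subst1 s).rename ρ = (b.rename (ρ.ext A)).subst1 (s.rename ρ) := by
  rw [subst1, subst1, subst_rename, rename_subst]
  congr 1
  funext B v
  cases v <;> rfl

namespace Eqv

theorem app_left {f g : Tm Γ (.arrow A B)} (h : Eqv f g) (a : Tm Γ A) :
    Eqv (f.app a) (g.app a) :=
  congApp h (refl a)

theorem rename {a b : Tm Γ A} (h : Eqv a b) (ρ : Ren Γ Δ) : Eqv (a.rename ρ) (b.rename ρ) := by
  induction h generalizing Δ with
  | refl => exact refl _
  | symm _ ih => exact symm (ih ρ)
  | trans _ _ ih₁ ih₂ => exact trans (ih₁ ρ) (ih₂ ρ)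
  | congApp _ _ ihf iha => exact congApp (ihf ρ) (iha ρ)
  | congLam _ ih => exact congLam (ih _)
  | beta a b => exact Tm.rename_subst1 a b ρ ▸ beta _ _
  | eta a =>
    simp only [Tm.rename, Tm.weaken_rename_ext]
    exact eta _

theorem apps {Bs : List (Ty ν)} {t s : Tm Γ (Ty.arrsR Bs C)} (h : Eqv t s) (hs : HList Γ Bs) :
    Eqv (t.apps hs) (s.apps hs) := by
  induction hs with
  | nil => exact h
  | cons w _ ih => exact ih (app_left h w)

end Eqv

/-! ### Normalization -/

namespace Tm

mutual

/-- Neutral terms: a variable applied to η-long β-normal arguments. -/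
inductive Neutral : ∀ {Γ : Ctx ν} {A : Ty ν}, Tm Γ A → Prop
  | var {Γ : Ctx ν} {A : Ty ν} (v : Var Γ A) : Neutral (.var v)
  | app {Γ : Ctx ν} {A B : Ty ν} {f : Tm Γ (.arrow A B)} {a : Tm Γ A} :
      Neutral f → Normal a → Neutral (.app f a)

/-- η-long β-normal terms: abstractions at arrow types, neutral terms at atomic types. -/
inductive Normal : ∀ {Γ : Ctx ν} {A : Ty ν}, Tm Γ A → Prop
  | neutral {Γ : Ctx ν} {x : ν} {a : Tm Γ (.atom x)} : Neutral a → Normal a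
  | lam {Γ : Ctx ν} {A B : Ty ν} {b : Tm (A :: Γ) B} : Normal b → Normal (.lam b)

end

mutual

theorem Neutral.rename {Γ Δ : Ctx ν} {A : Ty ν} {t : Tm Γ A} (ρ : Ren Γ Δ) :
    Neutral t → Neutral (t.rename ρ)
  | .var v => .var _
  | .app hf ha => .app (hf.rename ρ) (ha.rename ρ)

theorem Normal.rename {Γ Δ : Ctx ν} {A : Ty ν} {t : Tm Γ A} (ρ : Ren Γ Δ) :
    Normal t → Normal (t.rename ρ)
  | .neutral h => .neutral (h.rename ρ)
  | .lam h => .lam (h.rename _)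

end

/-- The term is provably equal to an η-long β-normal term. -/
def HasNormalForm (t : Tm Γ A) : Prop := ∃ n, Normal n ∧ Eqv t n

/-- Tait's reducibility predicate. The clause at arrow types quantifies over renamings, which makes
the predicate stable under weakening. -/
def IsReducible : (A : Ty ν) → {Γ : Ctx ν} → Tm Γ A → Prop
  | .atom _, _, t => HasNormalForm t
  | .arrow A B, Γ, t => ∀ (Δ : Ctx ν) (ρ : Ren Γ Δ) (a : Tm Δ A),
      IsReducible A a → IsReducible B (.app (t.rename ρ) a)

theorem IsReducible.of_eqv {t s : Tm Γ A} (h : Eqv t s) (hs : IsReducible A s) :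
    IsReducible A t := by
  induction A generalizing Γ with
  | atom x =>
    obtain ⟨n, hn, h'⟩ := hs
    exact ⟨n, hn, h.trans h'⟩
  | arrow A B _ ihB => exact fun Δ ρ a ha => ihB ((h.rename ρ).app_left a) (hs Δ ρ a ha)

theorem IsReducible.rename {t : Tm Γ A} (h : IsReducible A t) (ρ : Ren Γ Δ) :
    IsReducible A (t.rename ρ) := by
  cases A with
  | atom x =>
    obtain ⟨n, hn, h'⟩ := h
    exact ⟨_, hn.rename ρ, h'.rename ρ⟩
  | arrow A B =>
    intro Θ ρ' a ha
    rw [rename_rename]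
    exact h Θ _ a ha

theorem IsReducible.hasNormalForm_and_of_neutral (A : Ty ν) :
    (∀ {Γ : Ctx ν} {t : Tm Γ A}, IsReducible A t → HasNormalForm t) ∧
    (∀ {Γ : Ctx ν} {t : Tm Γ A}, Neutral t → IsReducible A t) := by
  induction A with
  | atom x => exact ⟨id, fun {_ t} h => ⟨t, .neutral h, .refl t⟩⟩
  | arrow A B ihA ihB =>
    refine ⟨fun {Γ t} h => ?_, fun {Γ t} h Δ ρ a ha => ?_⟩
    · obtain ⟨n, hn, e⟩ := ihB.1 (h (A :: Γ) (fun _ => Var.vs) (.var .vz) (ihA.2 (.var _)))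
      exact ⟨.lam n, .lam hn, (Eqv.eta t).symm.trans (.congLam e)⟩
    · obtain ⟨n, hn, e⟩ := ihA.1 ha
      exact .of_eqv (.congApp (.refl _) e) (ihB.2 (.app (h.rename ρ) hn))

theorem isReducible_subst (t : Tm Γ A) (σ : Subst Γ Δ) (h : ∀ B v, IsReducible B (σ B v)) :
    IsReducible A (t.subst σ) := by
  induction t generalizing Δ with
  | var v => exact h _ v
  | app f a ihf iha =>
    have hf := ihf σ h Δ (fun _ v => v) _ (iha σ h)
    rwa [rename_eq_subst, subst_var] at hf
  | @lam Γ A B b ih =>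
    intro Θ ρ a ha
    refine .of_eqv (.beta _ _) ?_
    rw [subst_rename, Subst.rename_ext, subst_ext_subst1]
    refine ih _ fun B v => ?_
    cases v with
    | vz => exact ha
    | vs w => exact (h _ w).rename ρ

theorem hasNormalForm (t : Tm Γ A) : HasNormalForm t := by
  have ht := isReducible_subst t (fun _ => var)
    fun B v => (IsReducible.hasNormalForm_and_of_neutral B).2 (.var v)
  rw [subst_var] at ht
  exact (IsReducible.hasNormalForm_and_of_neutral A).1 ht

end Tm

/-! ### Full type structures -/

section Semantics

variable {D : Type*}

/-- The domain of type `A` in the full type structure in which every atomic type denotes `D`. -/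
def Ty.Interp (D : Type*) : Ty ν → Type _
  | .atom _ => D
  | .arrow A B => A.Interp D → B.Interp D

instance Ty.Interp.instNonempty [Nonempty D] (A : Ty ν) : Nonempty (A.Interp D) := by
  induction A with
  | atom => assumption
  | arrow A B _ _ => exact inferInstanceAs (Nonempty (A.Interp D → B.Interp D))

instance Ty.Interp.instFinite [Finite D] (A : Ty ν) : Finite (A.Interp D) := by
  induction A with
  | atom => assumption
  | arrow A B _ _ => exact inferInstanceAs (Finite (A.Interp D → B.Interp D))

/-- Valuations of the variables of a context in the full type structure over `D`. -/
abbrev Env (D : Type*) (Γ : Ctx ν) : Type _ := ∀ A : Ty ν, Var Γ A → A.Interp D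

/-- Extending a valuation with a value for the last variable. -/
def Env.cons (x : A.Interp D) (ρ : Env D Γ) : Env D (A :: Γ)
  | _, .vz => x
  | _, .vs w => ρ _ w

/-- The denotation of a term in the full type structure over `D`. -/
def Tm.eval : ∀ {Γ : Ctx ν} {A : Ty ν}, Tm Γ A → Env D Γ → A.Interp D
  | _, _, .var v, ρ => ρ _ v
  | _, _, .app f a, ρ => (f.eval ρ) (a.eval ρ)
  | _, _, .lam b, ρ => fun x => b.eval (ρ.cons x)

theorem Tm.eval_rename (t : Tm Γ A) (r : Ren Γ Δ) (ρ : Env D Δ) :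
    (t.rename r).eval ρ = t.eval fun B v => ρ B (r B v) := by
  induction t generalizing Δ with
  | var => rfl
  | app f a ihf iha => simp only [rename, eval, ihf, iha]
  | lam b ih =>
    funext x
    simp only [rename, eval, ih]
    congr 1
    funext B v
    cases v <;> rfl

theorem Tm.eval_subst (t : Tm Γ A) (σ : Subst Γ Δ) (ρ : Env D Δ) :
    (t.subst σ).eval ρ = t.eval fun B v => (σ B v).eval ρ := by
  induction t generalizing Δ with
  | var => rfl
  | app f a ihf iha => simp only [subst, eval, ihf, iha]
  | lam b ih =>
    funext x
    simp only [subst, eval, ih]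
    congr 1
    funext B v
    cases v with
    | vz => rfl
    | vs w => exact eval_rename _ _ _

theorem Eqv.eval_eq {a b : Tm Γ A} (h : Eqv a b) (ρ : Env D Γ) : a.eval ρ = b.eval ρ := by
  induction h with
  | refl => rfl
  | symm _ ih => exact (ih ρ).symm
  | trans _ _ ih₁ ih₂ => exact (ih₁ ρ).trans (ih₂ ρ)
  | congApp _ _ ihf iha => simp only [Tm.eval, ihf, iha]
  | congLam _ ih => exact funext fun x => ih (ρ.cons x)
  | beta a b =>
    rw [Tm.subst1, Tm.eval_subst]
    simp only [Tm.eval]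
    congr 1
    funext B v
    cases v <;> rfl
  | eta a => exact funext fun x => congrFun (a.eval_rename (fun _ => Var.vs) (ρ.cons x)) x

end Semantics

/-! ### Finite completeness -/

/-- Raw terms, with de Bruijn levels for variables and typed abstractions. Normalization by
evaluation reads back into them. -/
inductive RawTm (ν : Type) : Type
  | var : ℕ → RawTm ν
  | app : RawTm ν → RawTm ν → RawTm ν
  | lam : Ty ν → RawTm ν → RawTm ν

/-- The de Bruijn level of a variable. -/
def Var.level : ∀ {Γ : Ctx ν} {A : Ty ν}, Var Γ A → ℕ
  | _ :: Γ, _, .vz => Γ.length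
  | _ :: _, _, .vs v => v.level

theorem Var.level_lt_length (v : Var Γ A) : v.level < Γ.length := by
  induction v with
  | vz => exact Nat.lt_succ_self _
  | vs v ih => exact ih.trans (Nat.lt_succ_self _)

theorem Var.sigma_eq_of_level_eq {v : Var Γ A} {w : Var Γ B} (h : v.level = w.level) :
    (⟨A, v⟩ : Σ A, Var Γ A) = ⟨B, w⟩ := by
  induction v with
  | vz =>
    cases w with
    | vz => rfl
    | vs w => exact absurd h w.level_lt_length.ne'
  | vs v ih =>
    cases w with
    | vz => exact absurd h v.level_lt_length.ne
    | vs w => cases ih h; rfl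

/-- The raw term underlying a typed term. -/
def Tm.toRaw : ∀ {Γ : Ctx ν} {A : Ty ν}, Tm Γ A → RawTm ν
  | _, _, .var v => .var v.level
  | _, _, .app f a => .app f.toRaw a.toRaw
  | _, _, @Tm.lam _ _ A _ b => .lam A b.toRaw

theorem Tm.sigma_eq_of_toRaw_eq {t : Tm Γ A} {s : Tm Γ B} (h : t.toRaw = s.toRaw) :
    (⟨A, t⟩ : Σ A, Tm Γ A) = ⟨B, s⟩ := by
  induction t generalizing B with
  | var v =>
    cases s with
    | var w => cases Var.sigma_eq_of_level_eq (RawTm.var.inj h); rfl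
    | app | lam => cases h
  | app f a ihf iha =>
    cases s with
    | app g b =>
      obtain ⟨hf, ha⟩ := RawTm.app.inj h
      cases ihf hf
      cases iha ha
      rfl
    | var | lam => cases h
  | lam b ih =>
    cases s with
    | lam b' =>
      obtain ⟨rfl, hb⟩ := RawTm.lam.inj h
      cases ih hb
      rfl
    | var | app => cases h

/-- An approximation, inside a type `D`, of the families `ℕ → RawTm ν` of raw terms; the index is
the length of the context in which the family is read back. -/
structure Coding (ν D : Type) where
  encode : (ℕ → RawTm ν) → D
  decode : D → ℕ → RawTm ν

namespace Coding

/-- Decoding recovers the values of the encoded families that are recorded in `S`. -/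
def FaithfulOn {D : Type} (c : Coding ν D) (S : Finset (ℕ × RawTm ν)) : Prop :=
  ∀ g k, (k, g k) ∈ S → c.decode (c.encode g) k = g k

theorem exists_faithfulOn (S : Finset (ℕ × RawTm ν)) :
    ∃ (n : ℕ) (c : Coding ν (Fin n)), c.FaithfulOn S := by
  have : Nonempty (RawTm ν) := ⟨.var 0⟩
  obtain ⟨n, ⟨e⟩⟩ := Finite.exists_equiv_fin (Set S)
  let graph (g : ℕ → RawTm ν) : Set S := {p | g p.1.1 = p.1.2}
  refine ⟨n, ⟨fun g => e (graph g), fun d k => Classical.epsilon fun t =>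
    ∃ h : (k, t) ∈ S, ⟨(k, t), h⟩ ∈ e.symm d⟩, fun g k h => ?_⟩
  obtain ⟨_, ht⟩ := Classical.epsilon_spec
    (p := fun t => ∃ h : (k, t) ∈ S, ⟨(k, t), h⟩ ∈ e.symm (e (graph g)))
    ⟨g k, h, by rw [e.symm_apply_apply]; rfl⟩
  exact ((e.symm_apply_apply (graph g)).subset ht).symm

variable {D : Type} (c : Coding ν D)

mutual

/-- Interpretation of a family of raw terms as an element of the full type structure. -/
def reflect : (A : Ty ν) → (ℕ → RawTm ν) → A.Interp D
  | .atom _, g => c.encode g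
  | .arrow A B, g => fun x => reflect B fun k => .app (g k) (reify A x k)

/-- Read-back of an element of the full type structure as a family of raw terms. -/
def reify : (A : Ty ν) → A.Interp D → ℕ → RawTm ν
  | .atom _, x => c.decode x
  | .arrow A B, f => fun k => .lam A (reify B (f (reflect A fun _ => .var k)) (k + 1))

end

/-- The valuation that reflects every variable as itself. -/
def genericEnv (Γ : Ctx ν) : Env D Γ := fun A v => c.reflect A fun _ => .var v.level

theorem genericEnv_cons (Γ : Ctx ν) (A : Ty ν) :
    (c.genericEnv Γ).cons (c.reflect A fun _ => .var Γ.length) = c.genericEnv (A :: Γ) := by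
  funext B v
  cases v <;> rfl

end Coding

open Filter in
mutual

theorem Tm.Neutral.eventually_eval_eq_reflect {Γ : Ctx ν} {A : Ty ν} {t : Tm Γ A} :
    t.Neutral → ∀ᶠ S in atTop, ∀ (D : Type) (c : Coding ν D), c.FaithfulOn S →
      ∃ g, t.eval (c.genericEnv Γ) = c.reflect A g ∧ g Γ.length = t.toRaw
  | .var v => .of_forall fun _ _ _ _ => ⟨_, rfl, rfl⟩
  | .app hf ha => by
    filter_upwards [hf.eventually_eval_eq_reflect, ha.eventually_reify_eval] with S ihf iha D c hc
    obtain ⟨g, hg, hg'⟩ := ihf D c hc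
    exact ⟨_, by rw [eval, hg, Coding.reflect], by rw [hg', iha D c hc, toRaw]⟩

theorem Tm.Normal.eventually_reify_eval {Γ : Ctx ν} {A : Ty ν} {t : Tm Γ A} :
    t.Normal → ∀ᶠ S in atTop, ∀ (D : Type) (c : Coding ν D), c.FaithfulOn S →
      c.reify A (t.eval (c.genericEnv Γ)) Γ.length = t.toRaw
  | .neutral h => by
    filter_upwards [h.eventually_eval_eq_reflect,
      eventually_ge_atTop {(Γ.length, t.toRaw)}] with S ih hS D c hc
    obtain ⟨g, hg, hg'⟩ := ih D c hc
    rw [hg, ← hg']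
    exact hc g _ (hS (by rw [hg', Finset.mem_singleton]))
  | .lam h => by
    filter_upwards [h.eventually_reify_eval] with S ih D c hc
    have hb := ih D c hc
    rw [← Coding.genericEnv_cons] at hb
    exact congrArg (RawTm.lam _) hb

end

theorem exists_eval_ne_of_not_eqv {a b : Tm Γ A} (h : ¬ Eqv a b) :
    ∃ (n : ℕ) (_ : NeZero n) (ρ : Env (Fin n) Γ), a.eval ρ ≠ b.eval ρ := by
  obtain ⟨a', ha, hea⟩ := a.hasNormalForm
  obtain ⟨b', hb, heb⟩ := b.hasNormalForm
  obtain ⟨S, hSa, hSb⟩ := (ha.eventually_reify_eval.and hb.eventually_reify_eval).exists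
  obtain ⟨n, c, hc⟩ := Coding.exists_faithfulOn S
  have : NeZero n := ⟨by rintro rfl; exact (c.encode fun _ => .var 0).elim0⟩
  refine ⟨n, this, c.genericEnv Γ, fun heq => h ?_⟩
  rw [hea.eval_eq, heb.eval_eq] at heq
  have hraw : a'.toRaw = b'.toRaw := by rw [← hSa _ c hc, heq, hSb _ c hc]
  cases Tm.sigma_eq_of_toRaw_eq hraw
  exact hea.trans heb.symm

/-! ### Definability of finite functionals -/

/-- The type `C → ⋯ → C → C` with `n` arguments. -/
abbrev Ty.nary (C : Ty ν) (n : ℕ) : Ty ν := Ty.arrsR (List.replicate n C) C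

/-- The substitution of `C → ⋯ → C → C` (`n` arguments) for every atomic type. Its instances host
the full type structure over `Fin n`, whose base elements become the `n` projections. -/
def Ty.naryAtoms (C : Ty ν) (n : ℕ) : ν → Ty ν := fun _ => C.nary n

theorem Ty.exists_substA_naryAtoms_eq_arrsR (C : Ty ν) (n : ℕ) (A : Ty ν) :
    ∃ Bs, A.substA (Ty.naryAtoms C n) = Ty.arrsR Bs C := by
  induction A with
  | atom => exact ⟨_, rfl⟩
  | arrow A B _ ihB =>
    obtain ⟨Bs, h⟩ := ihB
    exact ⟨A.substA _ :: Bs, congrArg (Ty.arrow _) h⟩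

/-- The list of terms with entries `xs 0, …, xs (n - 1)`. -/
def HList.ofFn : ∀ {n : ℕ}, (Fin n → Tm Γ C) → HList Γ (List.replicate n C)
  | 0, _ => .nil
  | _ + 1, xs => .cons (xs 0) (ofFn fun i => xs i.succ)

namespace Tm

/-- The constant function with value `x`, of several arguments. -/
def const : ∀ {Γ : Ctx ν} (Bs : List (Ty ν)), Tm Γ C → Tm Γ (Ty.arrsR Bs C)
  | _, [], x => x
  | _, _ :: Bs, x => .lam (const Bs x.weaken)

theorem const_subst (Bs : List (Ty ν)) (x : Tm Γ C) (σ : Subst Γ Δ) :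
    (const Bs x).subst σ = const Bs (x.subst σ) := by
  induction Bs generalizing Γ Δ with
  | nil => rfl
  | cons B Bs ih =>
    refine congrArg lam ?_
    rw [ih, weaken_subst_ext]

theorem const_apps (x : Tm Γ C) {Bs : List (Ty ν)} (hs : HList Γ Bs) :
    Eqv ((const Bs x).apps hs) x := by
  induction hs with
  | nil => exact .refl x
  | cons w hs ih =>
    refine .trans (.apps (.beta _ w) hs) ?_
    rwa [subst1, const_subst, ← subst1, weaken_subst1]

/-- The projection of `C × ⋯ × C` onto its `i`-th factor, in curried form. -/
def proj : ∀ {n : ℕ} {Γ : Ctx ν}, Fin n → Tm Γ (C.nary n)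
  | _ + 1, _, i => Fin.cases (.lam (const _ (.var .vz))) (fun j => .lam (proj j)) i

theorem proj_subst {n : ℕ} (i : Fin n) (σ : Subst Γ Δ) :
    (proj i : Tm Γ (C.nary n)).subst σ = proj i := by
  induction n generalizing Γ Δ with
  | zero => exact i.elim0
  | succ n ih =>
    cases i using Fin.cases with
    | zero => exact congrArg lam (const_subst _ _ _)
    | succ j => exact congrArg lam (ih j _)

theorem proj_apps {n : ℕ} (i : Fin n) (xs : Fin n → Tm Γ C) :
    Eqv ((proj i).apps (HList.ofFn xs)) (xs i) := by
  induction n with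
  | zero => exact i.elim0
  | succ n ih =>
    cases i using Fin.cases with
    | zero =>
      refine .trans (.apps (.beta _ (xs 0)) _) ?_
      rw [subst1, const_subst]
      exact const_apps _ _
    | succ j =>
      refine .trans (.apps (.beta _ (xs 0)) _) ?_
      rw [subst1, proj_subst]
      exact ih j _

theorem exists_app_eqv_apps {Bs : List (Ty ν)} (hs : HList Γ Bs) :
    ∃ f : Tm Γ (.arrow (Ty.arrsR Bs C) C), ∀ t, Eqv (f.app t) (t.apps hs) := by
  induction hs with
  | nil => exact ⟨.lam (.var .vz), fun t => .beta _ t⟩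
  | cons w hs ih =>
    obtain ⟨f, hf⟩ := ih
    refine ⟨.lam (f.weaken.app ((var .vz).app w.weaken)), fun t => .trans (.beta _ t) ?_⟩
    have hsubst : (f.weaken.app ((var .vz).app w.weaken)).subst1 t = f.app (t.app w) :=
      congrArg₂ app (weaken_subst1 f t) (congrArg (app t) (weaken_subst1 w t))
    exact hsubst ▸ hf (t.app w)

theorem exists_case_arrsR {n : ℕ} (Bs : List (Ty ν)) (e : Fin n → Tm Γ (Ty.arrsR Bs C)) :
    ∃ f : Tm Γ (.arrow (C.nary n) (Ty.arrsR Bs C)), ∀ i, Eqv (f.app (proj i)) (e i) := by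
  induction Bs generalizing Γ with
  | nil =>
    obtain ⟨f, hf⟩ := exists_app_eqv_apps (HList.ofFn e)
    exact ⟨f, fun i => (hf _).trans (proj_apps i e)⟩
  | cons B Bs ih =>
    obtain ⟨f, hf⟩ := ih fun i => (e i).weaken.app (.var .vz)
    let shift : Ren Γ (C.nary n :: Γ) := fun _ => Var.vs
    let body := (f.rename (shift.ext B)).app (.var (.vs .vz))
    refine ⟨.lam (.lam body), fun i => ?_⟩
    have hf_subst : (f.rename (shift.ext B)).subst
        (Subst.ext (Subst.cons (proj i) fun _ v => .var v) B) = f := by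
      rw [rename_subst, Subst.ext_comp_ren]
      exact (congrArg (subst · f) (Subst.ext_var Γ B)).trans f.subst_var
    have hproj : (proj i : Tm Γ (C.nary n)).weaken = (proj i : Tm (B :: Γ) (C.nary n)) := by
      rw [weaken, rename_eq_subst, proj_subst]
    have hbody : (lam body).subst1 (proj i) = lam (f.app (proj i)) :=
      congrArg lam (congrArg₂ app hf_subst hproj)
    have hβ : Eqv (app (lam (lam body)) (proj i)) (lam (f.app (proj i))) := hbody ▸ .beta _ _
    exact hβ.trans ((Eqv.congLam (hf i)).trans (.eta (e i)))

theorem exists_case {n : ℕ} (e : Fin n → Tm Γ (A.substA (Ty.naryAtoms C n))) :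
    ∃ f : Tm Γ (.arrow (C.nary n) (A.substA (Ty.naryAtoms C n))),
      ∀ i, Eqv (f.app (proj i)) (e i) := by
  obtain ⟨Bs, h⟩ := Ty.exists_substA_naryAtoms_eq_arrsR C n A
  generalize A.substA (Ty.naryAtoms C n) = X at e h
  subst h
  exact exists_case_arrsR Bs e

end Tm

section Definability

variable {n : ℕ}

/-- The logical relation between terms and elements of the full type structure over `Fin n`, with
the `i`-th projection related to the base element `i`. -/
def Represents : ∀ A : Ty ν, Tm Δ (A.substA (Ty.naryAtoms C n)) → A.Interp (Fin n) → Prop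
  | .atom _, t, i => Eqv t (Tm.proj i)
  | .arrow A B, t, f => ∀ w x, Represents A w x → Represents B (t.app w) (f x)

theorem Represents.of_eqv {t s : Tm Δ (A.substA (Ty.naryAtoms C n))} {x : A.Interp (Fin n)}
    (h : Eqv t s) (hs : Represents A s x) : Represents A t x := by
  induction A with
  | atom => exact h.trans hs
  | arrow A B _ ihB => exact fun w y hw => ihB (h.app_left w) (hs w y hw)

theorem represents_substA_subst (a : Tm Γ A)
    (σ : Subst (Γ.map (Ty.substA (Ty.naryAtoms C n))) Δ) (ρ : Env (Fin n) Γ)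
    (h : ∀ B (v : Var Γ B), Represents B (σ _ (v.substA _)) (ρ B v)) :
    Represents A ((a.substA _).subst σ) (a.eval ρ) := by
  induction a with
  | var v => exact h _ v
  | app _ _ ihf iha => exact ihf σ ρ h _ _ (iha σ ρ h)
  | lam b ih =>
    intro w x hw
    refine .of_eqv (.beta _ w) ?_
    rw [Tm.subst_ext_subst1]
    refine ih _ _ fun B v => ?_
    cases v with
    | vz => exact hw
    | vs v => exact h B v

/-- Every element of type `A` in the full type structure over `Fin n` is represented by a term in
context `Δ` of the corresponding instance of `A`. -/
def Definable (C : Ty ν) (n : ℕ) (Δ : Ctx ν) (A : Ty ν) : Prop :=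
  ∀ x : A.Interp (Fin n), ∃ t : Tm Δ (A.substA (Ty.naryAtoms C n)), Represents A t x

theorem definable_atom (α : ν) : Definable C n Δ (.atom α) := fun i => ⟨Tm.proj i, .refl _⟩

theorem Definable.atom_arrow (α : ν) (hB : Definable C n Δ B) :
    Definable C n Δ (.arrow (.atom α) B) := by
  intro g
  choose e he using fun i => hB (g i)
  obtain ⟨f, hf⟩ := Tm.exists_case e
  exact ⟨f, fun w i hw => .of_eqv (.trans (.congApp (.refl f) hw) (hf i)) (he i)⟩

theorem definable_of_dependsOn [NeZero n] {A₁ A₂ : Ty ν} (h₁ : Definable C n Δ A₁)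
    (h₂ : ∀ B, Definable C n Δ B → Definable C n Δ (.arrow A₂ B))
    (s : Finset (A₁.Interp (Fin n))) (hB : Definable C n Δ B)
    (g : (A₁.Interp (Fin n) → A₂.Interp (Fin n)) → B.Interp (Fin n)) (hg : DependsOn g s) :
    ∃ t : Tm Δ (Ty.substA (Ty.naryAtoms C n) _), Represents (.arrow (.arrow A₁ A₂) B) t g := by
  classical
  induction s using Finset.induction_on generalizing B with
  | empty =>
    obtain ⟨t, ht⟩ := hB (g fun _ => Classical.arbitrary _)
    refine ⟨.lam t.weaken, fun w f _ => .of_eqv (.beta _ w) ?_⟩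
    have hconst : g f = g fun _ => Classical.arbitrary _ := hg (by simp)
    rwa [Tm.weaken_subst1, hconst]
  | insert z s hz ih =>
    -- `g f = g' f (f z)`, where `g'` overwrites the value at `z` and so depends only on `s`.
    let g' : (A₁.Interp (Fin n) → A₂.Interp (Fin n)) → (A₂.arrow B).Interp (Fin n) :=
      fun f y => g (Function.update f z y)
    have hg' : DependsOn g' s := fun f₁ f₂ hf => funext fun y =>
      hg.update z y (by rwa [Finset.erase_insert hz])
    obtain ⟨t, ht⟩ := ih (h₂ B hB) g' hg'
    obtain ⟨w, hw⟩ := h₁ z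
    let body := (t.weaken.app (.var .vz)).app ((Tm.var .vz).app w.weaken)
    refine ⟨.lam body, fun u f hu => .of_eqv (.beta _ u) ?_⟩
    have hbody : body.subst1 u = (t.app u).app (u.app w) :=
      congrArg₂ Tm.app (congrArg (Tm.app · u) (Tm.weaken_subst1 t u))
        (congrArg (Tm.app u) (Tm.weaken_subst1 w u))
    rw [hbody, ← Function.update_eq_self z f]
    exact ht u f hu _ _ (hu w z hw)

theorem definable_and_definable_arrow [NeZero n] (A : Ty ν) :
    Definable C n Δ A ∧ ∀ B, Definable C n Δ B → Definable C n Δ (.arrow A B) := by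
  induction A with
  | atom α => exact ⟨definable_atom α, fun _ => .atom_arrow α⟩
  | arrow A₁ A₂ ih₁ ih₂ =>
    refine ⟨ih₁.2 A₂ ih₂.1, fun B hB g => ?_⟩
    have := Fintype.ofFinite (A₁.Interp (Fin n))
    exact definable_of_dependsOn ih₁.1 ih₂.2 .univ hB g (by simpa using dependsOn_univ g)

end Definability

/-! ### Böhm-out -/

/-- Some list of arguments turns `t` into `c` and `s` into `d`. The type equation says that
`t` and `s` accept these arguments. -/
def SeparableInto (t s : Tm Γ A) (c d : Tm Γ C) : Prop :=
  ∃ (Bs : List (Ty ν)) (hs : HList Γ Bs) (e : A = Ty.arrsR Bs C),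
    Eqv ((e ▸ t : Tm Γ (Ty.arrsR Bs C)).apps hs) c ∧ Eqv ((e ▸ s : Tm Γ (Ty.arrsR Bs C)).apps hs) d

theorem SeparableInto.of_app {t s : Tm Γ (.arrow A B)} {w : Tm Γ A} {c d : Tm Γ C}
    (h : SeparableInto (t.app w) (s.app w) c d) : SeparableInto t s c d := by
  obtain ⟨Bs, hs, rfl, hc, hd⟩ := h
  exact ⟨A :: Bs, .cons w hs, rfl, hc, hd⟩

theorem SeparableInto.exists_wk_apps {t s : Tm [] A} {c d : Tm Γ C}
    (h : SeparableInto t.wk s.wk c d) :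
    ∃ (Bs : List (Ty ν)) (hs : HList Γ Bs) (e : A = Ty.arrsR Bs C),
      Eqv (Tm.apps (Tm.wk (e ▸ t)) hs) c ∧ Eqv (Tm.apps (Tm.wk (e ▸ s)) hs) d := by
  obtain ⟨Bs, hs, rfl, hc, hd⟩ := h
  exact ⟨Bs, hs, rfl, hc, hd⟩

theorem separableInto_of_eqv_proj {n : ℕ} {i j : Fin n} {t s : Tm Γ (C.nary n)}
    (ht : Eqv t (Tm.proj i)) (hs : Eqv s (Tm.proj j)) (hij : i ≠ j) (c d : Tm Γ C) :
    SeparableInto t s c d := by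
  let xs : Fin n → Tm Γ C := Function.update (fun _ => d) i c
  have hi : xs i = c := Function.update_self ..
  have hj : xs j = d := Function.update_of_ne hij.symm ..
  exact ⟨_, HList.ofFn xs, rfl, (ht.apps _).trans (hi ▸ Tm.proj_apps i xs),
    (hs.apps _).trans (hj ▸ Tm.proj_apps j xs)⟩

theorem Represents.separableInto {n : ℕ} [NeZero n] {t s : Tm Γ (A.substA (Ty.naryAtoms C n))}
    {x y : A.Interp (Fin n)} (ht : Represents A t x) (hs : Represents A s y) (hxy : x ≠ y)
    (c d : Tm Γ C) : SeparableInto t s c d := by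
  induction A with
  | atom => exact separableInto_of_eqv_proj ht hs hxy c d
  | arrow A B _ ihB =>
    obtain ⟨z, hz⟩ := Function.ne_iff.mp hxy
    obtain ⟨w, hw⟩ := (definable_and_definable_arrow A).1 z
    exact (ihB (ht w z hw) (hs w z hw) hz).of_app

theorem separableInto_wk_lamAll {n : ℕ} [NeZero n] {a b : Tm Γ A} {ρ : Env (Fin n) Γ}
    (h : a.eval ρ ≠ b.eval ρ) (c d : Tm Δ C) :
    SeparableInto (a.substA (Ty.naryAtoms C n)).lamAll.wk (b.substA (Ty.naryAtoms C n)).lamAll.wk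
      c d := by
  induction Γ generalizing A with
  | nil =>
    have hrep (t : Tm [] A) :
        Represents A ((t.substA (Ty.naryAtoms C n)).wk : Tm Δ _) (t.eval ρ) := by
      rw [Tm.wk, Tm.rename_eq_subst]
      exact represents_substA_subst t _ ρ fun _ v => v.elim0
    exact (hrep a).separableInto (hrep b) h c d
  | cons X Γ ih =>
    let tail : Env (Fin n) Γ := fun B v => ρ B (.vs v)
    have hcons : Env.cons (ρ X .vz) tail = ρ := by funext B v; cases v <;> rfl
    refine ih (a := .lam a) (b := .lam b) (ρ := tail) fun heq => h ?_
    rw [← hcons]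
    exact congrFun heq (ρ X .vz)

end

/--
**Theorem 6.1 (analogue of Böhm's Theorem for the typed lambda calculus Λ).**
If `a` and `b` are of the same type and `a = b` is not provable in Λ, then for every
two terms `c` and `d` of the same type one can construct type-instances `a′` and `b′`
of `a` and `b` respectively, and terms `h₁, …, hₙ` (`n ≥ 0`), and also find variables
`x₁, …, xₘ` (`m ≥ 0`, here: all the free variables of `a` and `b`, i.e. the context `Γ`),
such that `(λx₁…xₘ.a′)h₁…hₙ = c` and `(λx₁…xₘ.b′)h₁…hₙ = d` are provable in Λ.
-/
theorem boehm_typed_lambda {ν : Type} [Nonempty ν] {Γ : Ctx ν} {A : Ty ν}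
    (a b : Tm Γ A) (hne : ¬ Eqv a b) {Δ : Ctx ν} {C : Ty ν} (c d : Tm Δ C) :
    ∃ (σ : ν → Ty ν) (Bs : List (Ty ν)) (hs : HList Δ Bs)
      (e : Ty.arrs (Γ.map (Ty.substA σ)) (A.substA σ) = Ty.arrsR Bs C),
      Eqv (Tm.apps (Tm.wk (e ▸ Tm.lamAll (a.substA σ))) hs) c ∧
      Eqv (Tm.apps (Tm.wk (e ▸ Tm.lamAll (b.substA σ))) hs) d := by
  obtain ⟨n, _, ρ, hρ⟩ := exists_eval_ne_of_not_eqv hne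
  exact ⟨Ty.naryAtoms C n, (separableInto_wk_lamAll hρ c d).exists_wk_apps⟩
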